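/- There is a universal constant C such that the following holds. Let I = [−1/2, 1/2), let k ≤ 0 be an integer, and let ω ≠ ω' be two dyadic intervals of length 2^k. Let ξ_ω ∈ ω and ξ_{ω'} ∈ ω', and let φ_ω, φ_{ω'} be Schwartz functions with Fourier transforms supported on ω and ω' respectively, and D_1 := sup_x max(2^k |φ̂_ω'(x)|, 2^k |φ̂_{ω'}'(x)|). Define the operators T_ω, T_{ω'} : L²(3I) → L²(ℝ) by T_ω[f](x) = (φ_ω * f)(x) − φ_ω(x) ∫_{3I} e^{−2πi ξ_ω y} f(y) dy, and analogously for T_{ω'}. Then the operator norm of the composition T_ω T_{ω'}^* : L²(ℝ) → L²(ℝ) satisfies ‖T_ω T_{ω'}^*‖ ≤ C D_1² 2^{3k} / |ξ_ω − ξ_{ω'}|. -/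

import Mathlib

/-!
On the frequency side `T_ω f` is `φ̂_ω(ξ) (f̂(ξ) - f̂(ξ_ω))`. Since `φ̂_ω` is supported on `ω` and
bounded there by `D_1`, Plancherel gives
`‖T_ω f‖ ≤ D_1 2^{k/2} sup_{ξ ∈ ω} |f̂(ξ) - f̂(ξ_ω)|` (`norm_apply_le`), where the difference is
`⟪w_ξ, f⟫` with `w_ξ(y) = e^{2πiξy} - e^{2πiξ_ω y}` on `3I`.

For `f = T_{ω'}^* v` this inner product is `⟪T_{ω'} w_ξ, v⟫`, at most `‖T_{ω'} w_ξ‖ ‖v‖`, and the same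
estimate applied to `T_{ω'} w_ξ` reduces everything to a bound, for `ξ ∈ ω` and `η ∈ ω'`, on
`∫_{3I} (e^{2πiξy} - e^{2πiξ_ω y}) (e^{-2πiηy} - e^{-2πiξ_{ω'} y}) dy`. One integration by parts
(`norm_integral_osc_le`) bounds this by a constant times
`|ξ - ξ_ω| |η - ξ_{ω'}| / |ξ_ω - ξ_{ω'}| ≤ 2^{2k} / |ξ_ω - ξ_{ω'}|`. The two factors `D_1 2^{k/2}` supply
the remaining `D_1² 2^k`.
-/

open MeasureTheory Complex Set Real
open scoped ENNReal NNReal FourierTransform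

/-- The dyadic interval `[2^k n, 2^k (n+1))`. -/
def dyadicI (k n : ℤ) : Set ℝ := Set.Ico ((2:ℝ) ^ k * n) ((2:ℝ) ^ k * (n + 1))

/-! ### An oscillatory integral -/

lemma norm_fourierChar_sub_one_le (t : ℝ) : ‖((𝐞 t : Circle) : ℂ) - 1‖ ≤ 2 * π * |t| := by
  have h := Real.norm_exp_I_mul_ofReal_sub_one_le (x := 2 * π * t)
  rw [Real.fourierChar_apply, mul_comm]
  refine h.trans (le_of_eq ?_)
  rw [Real.norm_eq_abs, abs_mul, abs_of_pos Real.two_pi_pos]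

lemma hasDerivAt_fourierChar_mul (c y : ℝ) :
    HasDerivAt (fun y : ℝ => ((𝐞 (c * y) : Circle) : ℂ))
      (2 * π * I * c * ((𝐞 (c * y) : Circle) : ℂ)) y := by
  have h := (Real.hasDerivAt_fourierChar (c * y)).scomp y ((hasDerivAt_id y).const_mul c)
  refine h.congr_deriv ?_
  rw [Complex.real_smul]
  push_cast
  ring

/-- The core cancellation estimate. The integrand is `𝐞 ((a - b) y)` times the slowly varying
amplitude `(𝐞 ((ξ - a) y) - 1) (𝐞 ((b - η) y) - 1)`, which is `O(|ξ - a| |η - b|)` on the bounded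
interval together with its derivative; one integration by parts gains the factor `1 / |a - b|`. -/
lemma norm_integral_osc_le (a b ξ η : ℝ) (hab : a ≠ b) :
    ‖∫ y in Set.Ico (-(3/2) : ℝ) (3/2),
      (((𝐞 (ξ * y) : Circle) : ℂ) - (𝐞 (a * y) : Circle)) *
        (((𝐞 (-(η * y)) : Circle) : ℂ) - (𝐞 (-(b * y)) : Circle))‖
      ≤ 100 * |ξ - a| * |η - b| / |a - b| := by
  set c := a - b with hc
  have hc0 : c ≠ 0 := sub_ne_zero.2 hab
  set p := ξ - a with hp
  set q := b - η with hq
  have hqq : |η - b| = |q| := abs_sub_comm _ _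
  rw [hqq]
  set u : ℝ → ℂ := fun y => (((𝐞 (p * y) : Circle) : ℂ) - 1) * (((𝐞 (q * y) : Circle) : ℂ) - 1)
    with hu
  set u' : ℝ → ℂ := fun y =>
    (2 * π * I * p * ((𝐞 (p * y) : Circle) : ℂ)) * (((𝐞 (q * y) : Circle) : ℂ) - 1) +
    (((𝐞 (p * y) : Circle) : ℂ) - 1) * (2 * π * I * q * ((𝐞 (q * y) : Circle) : ℂ)) with hu'
  set v' : ℝ → ℂ := fun y => ((𝐞 (c * y) : Circle) : ℂ) with hv'
  set v : ℝ → ℂ := fun y => (2 * π * I * c)⁻¹ * ((𝐞 (c * y) : Circle) : ℂ) with hv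
  have hcc : (2 * π * I * c : ℂ) ≠ 0 := by
    simp [hc0, Real.pi_ne_zero]
  have hcont : ∀ r : ℝ, Continuous fun y : ℝ => ((𝐞 (r * y) : Circle) : ℂ) := fun r =>
    continuous_iff_continuousAt.2 fun y => (hasDerivAt_fourierChar_mul r y).continuousAt
  have hu_d : ∀ y, HasDerivAt u (u' y) y := fun y =>
    ((hasDerivAt_fourierChar_mul p y).sub_const 1).mul
      ((hasDerivAt_fourierChar_mul q y).sub_const 1)
  have hv_d : ∀ y, HasDerivAt v (v' y) y := fun y => by
    have := (hasDerivAt_fourierChar_mul c y).const_mul (2 * π * I * c)⁻¹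
    rwa [inv_mul_cancel_left₀ hcc] at this
  have hu'c : Continuous u' := by
    have := hcont p; have := hcont q
    fun_prop
  have hv'c : Continuous v' := hcont c
  have key : (∫ y in Set.Ico (-(3/2) : ℝ) (3/2),
      (((𝐞 (ξ * y) : Circle) : ℂ) - (𝐞 (a * y) : Circle)) *
        (((𝐞 (-(η * y)) : Circle) : ℂ) - (𝐞 (-(b * y)) : Circle)))
      = ∫ y in (-(3/2) : ℝ)..(3/2), u y * v' y := by
    rw [intervalIntegral.integral_of_le (by norm_num), integral_Ico_eq_integral_Ioc]
    congr 1
    ext y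
    have e1 : ξ * y = a * y + p * y := by rw [hp]; ring
    have e2 : -(η * y) = -(b * y) + q * y := by rw [hq]; ring
    have e3 : c * y = a * y + -(b * y) := by rw [hc]; ring
    simp only [hu, hv']
    rw [e1, e2, e3]
    simp only [AddChar.map_add_eq_mul, Circle.coe_mul]
    ring
  rw [key, intervalIntegral.integral_mul_deriv_eq_deriv_mul (fun y _ => hu_d y)
    (fun y _ => hv_d y) (hu'c.intervalIntegrable _ _) (hv'c.intervalIntegrable _ _)]
  have hnv : ∀ y, ‖v y‖ = (2 * π * |c|)⁻¹ := fun y => by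
    rw [hv]
    simp only [norm_mul, norm_inv, Circle.norm_coe]
    simp [abs_of_pos Real.pi_pos]
  have hnu : ∀ y : ℝ, |y| ≤ 3/2 → ‖u y‖ ≤ 9 * π ^ 2 * |p| * |q| := fun y hy => by
    have h1 := norm_fourierChar_sub_one_le (p * y)
    have h2 := norm_fourierChar_sub_one_le (q * y)
    rw [abs_mul] at h1 h2
    calc ‖u y‖ ≤ (2 * π * (|p| * (3/2))) * (2 * π * (|q| * (3/2))) := by
          rw [hu]; simp only [norm_mul]
          refine mul_le_mul (h1.trans ?_) (h2.trans ?_) (norm_nonneg _) (by positivity) <;> gcongr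
      _ = _ := by ring
  have hnu' : ∀ y : ℝ, |y| ≤ 3/2 → ‖u' y‖ ≤ 12 * π ^ 2 * |p| * |q| := fun y hy => by
    have h1 := norm_fourierChar_sub_one_le (p * y)
    have h2 := norm_fourierChar_sub_one_le (q * y)
    rw [abs_mul] at h1 h2
    calc ‖u' y‖ ≤ (2 * π * |p|) * (2 * π * (|q| * (3/2))) +
            (2 * π * (|p| * (3/2))) * (2 * π * |q|) := by
          refine (norm_add_le _ _).trans (add_le_add ?_ ?_)
          · rw [norm_mul]
            refine mul_le_mul (le_of_eq ?_) (h2.trans ?_) (norm_nonneg _) (by positivity)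
            · rw [norm_mul, Circle.norm_coe]
              simp [abs_of_pos Real.pi_pos]
            · gcongr
          · rw [norm_mul]
            refine mul_le_mul (h1.trans ?_) (le_of_eq ?_) (norm_nonneg _) (by positivity)
            · gcongr
            · rw [norm_mul, Circle.norm_coe]
              simp [abs_of_pos Real.pi_pos]
      _ = _ := by ring
  have hint : ‖∫ y in (-(3/2) : ℝ)..(3/2), u' y * v y‖ ≤
      (12 * π ^ 2 * |p| * |q| * (2 * π * |c|)⁻¹) * |3/2 - (-(3/2) : ℝ)| := by
    refine intervalIntegral.norm_integral_le_of_norm_le_const fun y hy => ?_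
    rw [uIoc_of_le (by norm_num)] at hy
    rw [norm_mul, hnv]
    gcongr
    exact hnu' y (abs_le.2 ⟨hy.1.le, hy.2⟩)
  have hb : ∀ y : ℝ, |y| ≤ 3/2 → ‖u y * v y‖ ≤ 9 * π ^ 2 * |p| * |q| * (2 * π * |c|)⁻¹ := by
    intro y hy
    rw [norm_mul, hnv]
    gcongr
    exact hnu y hy
  have hcpos : 0 < |c| := abs_pos.2 hc0
  calc _ ≤ 9 * π ^ 2 * |p| * |q| * (2 * π * |c|)⁻¹ + 9 * π ^ 2 * |p| * |q| * (2 * π * |c|)⁻¹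
        + (12 * π ^ 2 * |p| * |q| * (2 * π * |c|)⁻¹) * |3/2 - (-(3/2) : ℝ)| := by
        refine (norm_sub_le _ _).trans (add_le_add ((norm_sub_le _ _).trans
          (add_le_add (hb _ ?_) (hb _ ?_))) hint)
        · norm_num
        · norm_num [abs_of_pos]
    _ = 27 * π * |p| * |q| / |c| := by
        have : |3/2 - (-(3/2) : ℝ)| = 3 := by norm_num
        rw [this]
        field_simp
        ring
    _ ≤ 100 * |p| * |q| / |c| := by
        have := Real.pi_lt_d2
        gcongr
        linarith

/-! ### Fourier inversion and Plancherel -/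

/-- Plancherel for a function `G ∈ L¹ ∩ L²`, whose inverse Fourier transform is given by the
integral formula: this agrees with the `L²` inverse transform, as testing against Schwartz functions
shows. -/
lemma norm_eq_of_ae_eq_fourierInv {G : ℝ → ℂ} (hG1 : Integrable G) (hG2 : MemLp G 2)
    (F : Lp ℂ 2 (volume : Measure ℝ)) (hF : F =ᵐ[volume] 𝓕⁻ G) :
    ‖F‖ = ‖hG2.toLp G‖ := by
  suffices h : F = 𝓕⁻ (hG2.toLp G) by
    rw [h, ← Lp.norm_fourier_eq, FourierTransform.fourier_fourierInv_eq]
  refine (SchwartzMap.denseRange_toLpCLM (E := ℝ) (F := ℂ) (p := 2) (μ := volume)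
    ENNReal.ofNat_ne_top).eq_of_inner_right ℂ fun u => ?_
  change inner ℂ (u.toLp 2) F = inner ℂ (u.toLp 2) _
  rw [← Lp.inner_fourier_eq (u.toLp 2 volume) (𝓕⁻ (hG2.toLp G)), FourierTransform.fourier_fourierInv_eq,
    SchwartzMap.toLp_fourier_eq, L2.inner_def, L2.inner_def]
  have h := VectorFourier.integral_sesq_fourierIntegral_eq_neg_flip (innerSL ℂ : ℂ →L⋆[ℂ] ℂ →L[ℂ] ℂ)
    (L := innerₗ ℝ) (μ := volume) (ν := volume) continuous_fourierChar continuous_inner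
    u.integrable hG1
  calc _ = ∫ x, inner ℂ (u x) (𝓕⁻ G x) := by
        refine integral_congr_ae ?_
        filter_upwards [hF, u.coeFn_toLp 2 volume] with x h1 h2
        rw [h1, h2]
    _ = ∫ ξ, inner ℂ (𝓕 ⇑u ξ) (G ξ) := by
        simp only [innerSL_apply_apply] at h
        refine Eq.trans ?_ h.symm
        refine integral_congr_ae (Filter.Eventually.of_forall fun x => ?_)
        simp only [Real.fourierInv_eq, VectorFourier.fourierIntegral]
        simp
    _ = _ := by
        refine integral_congr_ae ?_
        filter_upwards [hG2.coeFn_toLp, (𝓕 u).coeFn_toLp 2 volume] with x h1 h2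
        rw [h1, h2, SchwartzMap.fourier_coe]

/-- The operator `T_ω` on the frequency side: it maps `f` to the inverse Fourier transform of
`φ̂(ξ) (f̂(ξ) - f̂(a))`. -/
lemma fourierInv_mul_fourier_sub {f : ℝ → ℂ} (hf : Integrable f) (φ : SchwartzMap ℝ ℂ)
    (a x : ℝ) :
    𝓕⁻ (fun ξ => 𝓕 ⇑φ ξ * (𝓕 f ξ - 𝓕 f a)) x
      = (∫ y, f y * φ (x - y)) - φ x * 𝓕 f a := by
  set g : ℝ → ℂ := 𝓕 ⇑φ with hg
  have hgi : Integrable g := by rw [hg, ← SchwartzMap.fourier_coe]; exact (𝓕 φ).integrable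
  have hinv : ∀ z, ∫ ξ, ((𝐞 (ξ * z) : Circle) : ℂ) * g ξ = φ z := fun z => by
    have h1 : 𝓕⁻ (𝓕 φ) = φ := FourierTransform.fourierInv_fourier_eq φ
    have h2 : (𝓕⁻ (𝓕 φ)) z = φ z := by rw [h1]
    rw [SchwartzMap.fourierInv_coe, SchwartzMap.fourier_coe, Real.fourierInv_eq] at h2
    rw [← h2]
    congr 1; ext ξ
    simp [Circle.smul_def, hg, mul_comm]
  have hec : ∀ z : ℝ, Continuous fun ξ : ℝ => ((𝐞 (ξ * z) : Circle) : ℂ) := fun z =>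
    continuous_subtype_val.comp (continuous_fourierChar.comp (continuous_mul_const z))
  have hei : Integrable fun ξ => ((𝐞 (ξ * x) : Circle) : ℂ) * g ξ :=
    hgi.bdd_mul (hec x).aestronglyMeasurable
      (Filter.Eventually.of_forall fun ξ => (Circle.norm_coe _).le)
  have hfc : Continuous (𝓕 f) :=
    VectorFourier.fourierIntegral_continuous continuous_fourierChar continuous_inner hf
  have hfb : ∀ ξ, ‖𝓕 f ξ‖ ≤ ∫ y, ‖f y‖ := fun ξ =>
    VectorFourier.norm_fourierIntegral_le_integral_norm _ _ _ _ _
  have hei2 : Integrable fun ξ => 𝓕 f ξ * (((𝐞 (ξ * x) : Circle) : ℂ) * g ξ) :=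
    hei.bdd_mul hfc.aestronglyMeasurable (Filter.Eventually.of_forall hfb)
  -- `∫ f̂ h = ∫ f ĥ` for `h(ξ) = e^{2πiξx} φ̂(ξ)`, whose Fourier transform at `y` is `φ(x - y)`.
  have hmain := VectorFourier.integral_fourierIntegral_smul_eq_flip
    (L := innerₗ ℝ) (μ := volume) (ν := volume) continuous_fourierChar continuous_inner hf hei
  have hmain' : ∫ ξ, 𝓕 f ξ * (((𝐞 (ξ * x) : Circle) : ℂ) * g ξ) = ∫ y, f y * φ (x - y) := by
    refine Eq.trans hmain (integral_congr_ae (Filter.Eventually.of_forall fun y => ?_))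
    simp only [smul_eq_mul, VectorFourier.fourierIntegral]
    rw [← hinv (x - y)]
    congr 2; ext ξ
    have : ξ * (x - y) = -(ξ * y) + ξ * x := by ring
    rw [this, AddChar.map_add_eq_mul]
    simp [Circle.smul_def, mul_assoc, mul_comm, mul_left_comm]
  rw [Real.fourierInv_eq, ← hmain', ← hinv x, ← integral_mul_const,
    ← integral_sub hei2 (hei.mul_const _)]
  congr 1; ext ξ
  simp [Circle.smul_def, mul_comm]
  ring

/-! ### The operator bounds -/

/-- On `ω` one has `|φ̂| ≤ |ω| sup |φ̂'|`, since `φ̂` vanishes at the excluded right endpoint. -/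
lemma norm_fourier_le_of_support {k n : ℤ} {D : ℝ} (φ : SchwartzMap ℝ ℂ)
    (hsupp : Function.support (𝓕 ⇑φ) ⊆ dyadicI k n)
    (hD : ∀ x, (2:ℝ) ^ k * ‖deriv (𝓕 ⇑φ) x‖ ≤ D) {ξ : ℝ} (hξ : ξ ∈ dyadicI k n) :
    ‖𝓕 ⇑φ ξ‖ ≤ D := by
  have hk : (0:ℝ) < 2 ^ k := by positivity
  set r : ℝ := (2:ℝ) ^ k * (n + 1) with hr
  have hr0 : 𝓕 ⇑φ r = 0 := by
    by_contra h
    exact lt_irrefl r (hsupp h).2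
  have hdiff : Differentiable ℝ (𝓕 ⇑φ) := by
    rw [← SchwartzMap.fourier_coe]; exact (𝓕 φ).differentiable
  have h := Convex.norm_image_sub_le_of_norm_deriv_le (f := 𝓕 ⇑φ) (s := Set.univ) (x := r) (y := ξ)
    (C := D / 2 ^ k) (fun x _ => hdiff x)
    (fun x _ => by rw [le_div_iff₀ hk, mul_comm]; exact hD x) convex_univ trivial trivial
  rw [hr0, sub_zero] at h
  have hD0 : 0 ≤ D := (by positivity : (0:ℝ) ≤ 2 ^ k * ‖deriv (𝓕 ⇑φ) 0‖).trans (hD 0)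
  have hd : ‖ξ - r‖ ≤ 2 ^ k := by
    rw [Real.norm_eq_abs, abs_le]
    have h1 := hξ.1
    have h2 := hξ.2
    constructor <;> linarith
  calc _ ≤ D / 2 ^ k * ‖ξ - r‖ := h
    _ ≤ D / 2 ^ k * 2 ^ k := by gcongr
    _ = D := by field_simp

/-- If `F = T_ω[f]` and `|f̂(ξ) - f̂(a)| ≤ B` for all `ξ ∈ ω`, then `‖F‖ ≤ D B |ω|^{1/2}`: by
Plancherel `‖F‖` is the `L²` norm of `φ̂(ξ) (f̂(ξ) - f̂(a))`, which is supported on `ω` and at most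
`D B` there. Here `f` lives on a set `J` of finite measure and `f̂` is the Fourier transform of its
extension by zero. -/
lemma norm_apply_le {J : Set ℝ} [IsFiniteMeasure (volume.restrict J)] (hJm : MeasurableSet J)
    {k n : ℤ} {D B a : ℝ} (φ : SchwartzMap ℝ ℂ)
    (hsupp : Function.support (𝓕 ⇑φ) ⊆ dyadicI k n)
    (hD : ∀ x, (2:ℝ) ^ k * ‖deriv (𝓕 ⇑φ) x‖ ≤ D)
    (f : Lp ℂ 2 (volume.restrict J))
    (F : Lp ℂ 2 (volume : Measure ℝ))
    (hF : F =ᵐ[volume] fun x =>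
            (∫ y in J, f y * φ (x - y)) -
              φ x * ∫ y in J,
                Complex.exp (-(2 * (π : ℂ) * Complex.I * (a : ℂ) * (y : ℂ))) * f y)
    (hB0 : 0 ≤ B)
    (hB : ∀ ξ ∈ dyadicI k n, ‖∫ y in J,
      (((𝐞 (-(ξ * y)) : Circle) : ℂ) - (𝐞 (-(a * y)) : Circle)) * f y‖ ≤ B) :
    ‖F‖ ≤ D * B * √(2 ^ k) := by
  have hfi : Integrable f (volume.restrict J) :=
    (Lp.memLp f).integrable (by norm_num)
  set f1 : ℝ → ℂ := J.indicator f with hf1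
  have hf1i : Integrable f1 := (integrable_indicator_iff hJm).2 hfi
  have hft : ∀ ξ, 𝓕 f1 ξ = ∫ y in J, ((𝐞 (-(ξ * y)) : Circle) : ℂ) * f y := fun ξ => by
    rw [Real.fourier_real_eq, ← integral_indicator hJm]
    congr 1; ext y
    by_cases hy : y ∈ J <;> simp [hf1, hy, Circle.smul_def, mul_comm]
  have hec : ∀ z : ℝ, Continuous fun y : ℝ => ((𝐞 (-(z * y)) : Circle) : ℂ) := fun z =>
    continuous_subtype_val.comp (continuous_fourierChar.comp (continuous_const_mul z).neg)
  have hei : ∀ z : ℝ, Integrable (fun y : ℝ => ((𝐞 (-(z * y)) : Circle) : ℂ) * f y)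
      (volume.restrict J) := fun z =>
    hfi.bdd_mul (hec z).aestronglyMeasurable
      (Filter.Eventually.of_forall fun ξ => (Circle.norm_coe _).le)
  have hdiff : ∀ ξ, 𝓕 f1 ξ - 𝓕 f1 a = ∫ y in J,
      (((𝐞 (-(ξ * y)) : Circle) : ℂ) - (𝐞 (-(a * y)) : Circle)) * f y := fun ξ => by
    rw [hft, hft, ← integral_sub (hei _) (hei _)]
    congr 1; ext y; ring
  -- `F` is the inverse Fourier transform of `G`, which is dominated by `D * B` on `dyadicI k n`.
  set G : ℝ → ℂ := fun ξ => 𝓕 ⇑φ ξ * (𝓕 f1 ξ - 𝓕 f1 a) with hG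
  have hD0 : 0 ≤ D := (by positivity : (0:ℝ) ≤ 2 ^ k * ‖deriv (𝓕 ⇑φ) 0‖).trans (hD 0)
  have hωm : MeasurableSet (dyadicI k n) := measurableSet_Ico
  have hGb : ∀ ξ, ‖G ξ‖ ≤ ‖(dyadicI k n).indicator (fun _ => D * B) ξ‖ := fun ξ => by
    by_cases hξ : ξ ∈ dyadicI k n
    · rw [indicator_of_mem hξ, Real.norm_of_nonneg (by positivity), hG]
      simp only [norm_mul]
      gcongr
      · exact norm_fourier_le_of_support φ hsupp hD hξ
      · rw [hdiff]; exact hB ξ hξ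
    · have : 𝓕 ⇑φ ξ = 0 := by
        by_contra h; exact hξ (hsupp h)
      simp [hG, this]
  have hfc : Continuous (𝓕 f1) :=
    VectorFourier.fourierIntegral_continuous continuous_fourierChar continuous_inner hf1i
  have hφc : Continuous (𝓕 ⇑φ) := by
    rw [← SchwartzMap.fourier_coe]; exact (𝓕 φ).continuous
  have hGc : Continuous G := hφc.mul (hfc.sub continuous_const)
  have hvol : volume (dyadicI k n) = ENNReal.ofReal (2 ^ k) := by
    rw [dyadicI, Real.volume_Ico]; congr 1; ring
  have hmem : ∀ p : ℝ≥0∞, MemLp G p := fun p =>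
    (memLp_indicator_const p hωm (D * B) (Or.inr (by rw [hvol]; exact ENNReal.ofReal_ne_top))).mono
      hGc.aestronglyMeasurable (Filter.Eventually.of_forall hGb)
  have hFG : F =ᵐ[volume] 𝓕⁻ G := by
    refine hF.trans (Filter.Eventually.of_forall fun x => ?_)
    simp only
    rw [hG, fourierInv_mul_fourier_sub hf1i, hft]
    congr 1
    · rw [← integral_indicator hJm]
      congr 1; ext y
      by_cases hy : y ∈ J <;> simp [hf1, hy]
    · congr 2; ext y
      rw [Real.fourierChar_apply]
      congr 2
      push_cast
      ring
  rw [norm_eq_of_ae_eq_fourierInv (memLp_one_iff_integrable.1 (hmem 1)) (hmem 2) F hFG,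
    Lp.norm_toLp]
  have hle : eLpNorm G 2 volume ≤ ENNReal.ofReal (D * B * √(2 ^ k)) := by
    refine (eLpNorm_mono hGb).trans ?_
    rw [eLpNorm_indicator_const hωm (by norm_num) (by norm_num), hvol,
      ENNReal.ofReal_rpow_of_nonneg (by positivity) (by norm_num),
      Real.enorm_eq_ofReal (by positivity), ← ENNReal.ofReal_mul (by positivity),
      Real.sqrt_eq_rpow]
    norm_num
  exact ENNReal.toReal_le_of_le_ofReal (by positivity) hle

/-- The operator bound in real-valued form. For `ξ ∈ ω` put `w_ξ(y) = e^{2πiξy} - e^{2πiay}`, so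
that `f̂(ξ) - f̂(a) = ⟪w_ξ, f⟫`. For `f = T_{ω'}^* v` this equals `⟪T_{ω'} w_ξ, v⟫`, so `norm_apply_le`
is applied once to `T_ω f`, and once to `T_{ω'} w_ξ`, where the quantity to be bounded is the
oscillatory integral of `norm_integral_osc_le`. -/
lemma norm_comp_adjoint_le {k n n' : ℤ} {D a b : ℝ} (hab : a ≠ b)
    (ha : a ∈ dyadicI k n) (hb : b ∈ dyadicI k n') (φ φ' : SchwartzMap ℝ ℂ)
    (hsupp : Function.support (𝓕 ⇑φ) ⊆ dyadicI k n)
    (hsupp' : Function.support (𝓕 ⇑φ') ⊆ dyadicI k n')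
    (hD : ∀ x, (2:ℝ) ^ k * ‖deriv (𝓕 ⇑φ) x‖ ≤ D)
    (hD' : ∀ x, (2:ℝ) ^ k * ‖deriv (𝓕 ⇑φ') x‖ ≤ D)
    (S S' : Lp ℂ 2 (volume.restrict (Set.Ico (-(3/2) : ℝ) (3/2))) →L[ℂ]
          Lp ℂ 2 (volume : Measure ℝ))
    (hS : ∀ f : Lp ℂ 2 (volume.restrict (Set.Ico (-(3/2) : ℝ) (3/2))),
          (S f : ℝ → ℂ) =ᵐ[volume] fun x =>
            (∫ y in Set.Ico (-(3/2) : ℝ) (3/2), f y * φ (x - y)) -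
              φ x * ∫ y in Set.Ico (-(3/2) : ℝ) (3/2),
                Complex.exp (-(2 * (π : ℂ) * Complex.I * (a : ℂ) * (y : ℂ))) * f y)
    (hS' : ∀ f : Lp ℂ 2 (volume.restrict (Set.Ico (-(3/2) : ℝ) (3/2))),
          (S' f : ℝ → ℂ) =ᵐ[volume] fun x =>
            (∫ y in Set.Ico (-(3/2) : ℝ) (3/2), f y * φ' (x - y)) -
              φ' x * ∫ y in Set.Ico (-(3/2) : ℝ) (3/2),
                Complex.exp (-(2 * (π : ℂ) * Complex.I * (b : ℂ) * (y : ℂ))) * f y) :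
    ‖S.comp (ContinuousLinearMap.adjoint S')‖ ≤ 100 * D ^ 2 * 2 ^ (3 * k) / |a - b| := by
  have hD0 : 0 ≤ D := (by positivity : (0:ℝ) ≤ 2 ^ k * ‖deriv (𝓕 ⇑φ) 0‖).trans (hD 0)
  have hlen : ∀ {m : ℤ} {x y : ℝ}, x ∈ dyadicI k m → y ∈ dyadicI k m → |x - y| ≤ 2 ^ k := by
    intro m x y hx hy
    have h1 := hx.1; have h2 := hx.2; have h3 := hy.1; have h4 := hy.2
    rw [abs_le]; constructor <;> linarith
  set M : ℝ := 100 * 2 ^ k * 2 ^ k / |a - b| with hM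
  have hM0 : 0 ≤ M := by positivity
  have hsq : √((2:ℝ) ^ k) * √((2:ℝ) ^ k) = 2 ^ k := Real.mul_self_sqrt (by positivity)
  refine ContinuousLinearMap.opNorm_le_bound _ (by positivity) fun v => ?_
  -- With `B = D * M * √(2 ^ k) * ‖v‖` bounding `⟪w_ξ, f⟫`, the final constant is `D ^ 2 * M * 2 ^ k`.
  set f := ContinuousLinearMap.adjoint S' v with hf
  have hmain : ‖S f‖ ≤ D * (D * M * √(2 ^ k) * ‖v‖) * √(2 ^ k) := by
    refine norm_apply_le measurableSet_Ico (a := a) φ hsupp hD f (S f) (hS f)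
      (by positivity) fun ξ hξ => ?_
    set w : ℝ → ℂ := fun y => ((𝐞 (ξ * y) : Circle) : ℂ) - (𝐞 (a * y) : Circle) with hw
    have hec : ∀ z : ℝ, Continuous fun y : ℝ => ((𝐞 (z * y) : Circle) : ℂ) := fun z =>
      continuous_subtype_val.comp (continuous_fourierChar.comp (continuous_const_mul z))
    have hwm : MemLp w 2 (volume.restrict (Set.Ico (-(3/2) : ℝ) (3/2))) := by
      refine MemLp.of_bound ((hec ξ).sub (hec a)).aestronglyMeasurable 2
        (Filter.Eventually.of_forall fun y => (norm_sub_le _ _).trans ?_)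
      rw [Circle.norm_coe, Circle.norm_coe]; norm_num
    have hwS : ‖S' (hwm.toLp w)‖ ≤ D * M * √(2 ^ k) := by
      refine norm_apply_le measurableSet_Ico (a := b) φ' hsupp' hD' _ _ (hS' _) hM0 fun η hη => ?_
      have : (∫ y in Set.Ico (-(3/2) : ℝ) (3/2),
          (((𝐞 (-(η * y)) : Circle) : ℂ) - (𝐞 (-(b * y)) : Circle)) * hwm.toLp w y) =
          ∫ y in Set.Ico (-(3/2) : ℝ) (3/2),
            (((𝐞 (ξ * y) : Circle) : ℂ) - (𝐞 (a * y) : Circle)) *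
              (((𝐞 (-(η * y)) : Circle) : ℂ) - (𝐞 (-(b * y)) : Circle)) := by
        refine integral_congr_ae ?_
        filter_upwards [hwm.coeFn_toLp] with y hy
        rw [hy, mul_comm]
      rw [this]
      refine (norm_integral_osc_le a b ξ η hab).trans ?_
      have h1 := hlen hξ ha
      have h2 := hlen hη hb
      rw [hM]
      gcongr
    have hin : (∫ y in Set.Ico (-(3/2) : ℝ) (3/2),
        (((𝐞 (-(ξ * y)) : Circle) : ℂ) - (𝐞 (-(a * y)) : Circle)) * f y)
        = inner ℂ (hwm.toLp w) f := by
      rw [L2.inner_def]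
      refine integral_congr_ae ?_
      filter_upwards [hwm.coeFn_toLp] with y hy
      rw [hy, RCLike.inner_apply, mul_comm, hw]
      simp only [map_sub, AddChar.map_neg_eq_inv, Circle.coe_inv_eq_conj]
    rw [hin, hf, ContinuousLinearMap.adjoint_inner_right]
    exact (norm_inner_le_norm _ _).trans (by gcongr)
  refine hmain.trans (le_of_eq ?_)
  have h3 : (2:ℝ) ^ (3 * k) = 2 ^ k * 2 ^ k * 2 ^ k := by
    rw [← zpow_add₀ (by norm_num), ← zpow_add₀ (by norm_num), show k + k + k = 3 * k by ring]
  rw [h3, hM]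
  calc _ = 100 * D ^ 2 * (2 ^ k * 2 ^ k * (√(2 ^ k) * √(2 ^ k))) / |a - b| * ‖v‖ := by ring
    _ = _ := by rw [hsq]

/-- The off-diagonal estimate: for distinct dyadic intervals `ω ≠ ω'` of length `2^k ≤ 1`,
frequencies `ξ_ω ∈ ω`, `ξ_{ω'} ∈ ω'`, and the operators
`T_ω : L²(3I) → L²(ℝ)`, `T_ω[f](x) = (φ_ω * f)(x) - φ_ω(x) ∫_{3I} e^{-2πi ξ_ω y} f(y) dy`
(with `I = [-1/2, 1/2)`, `3I = [-3/2, 3/2)`), one has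
`‖T_ω T_{ω'}^*‖ ≤ C D_1² 2^{3k} / |ξ_ω - ξ_{ω'}|`. -/
theorem T_omega_composition_bound :
    ∃ C : ℝ≥0, ∀ (k n n' : ℤ), k ≤ 0 → n ≠ n' →
      ∀ ξω ξω' : ℝ, ξω ∈ dyadicI k n → ξω' ∈ dyadicI k n' →
      ∀ φω φω' : SchwartzMap ℝ ℂ,
        Function.support (𝓕 ⇑φω) ⊆ dyadicI k n →
        Function.support (𝓕 ⇑φω') ⊆ dyadicI k n' →
      ∀ S S' : Lp ℂ 2 (volume.restrict (Set.Ico (-(3/2) : ℝ) (3/2))) →L[ℂ]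
          Lp ℂ 2 (volume : Measure ℝ),
        (∀ f : Lp ℂ 2 (volume.restrict (Set.Ico (-(3/2) : ℝ) (3/2))),
          (S f : ℝ → ℂ) =ᵐ[volume] fun x =>
            (∫ y in Set.Ico (-(3/2) : ℝ) (3/2), f y * φω (x - y)) -
              φω x * ∫ y in Set.Ico (-(3/2) : ℝ) (3/2),
                Complex.exp (-(2 * (π : ℂ) * Complex.I * (ξω : ℂ) * (y : ℂ))) * f y) →
        (∀ f : Lp ℂ 2 (volume.restrict (Set.Ico (-(3/2) : ℝ) (3/2))),
          (S' f : ℝ → ℂ) =ᵐ[volume] fun x =>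
            (∫ y in Set.Ico (-(3/2) : ℝ) (3/2), f y * φω' (x - y)) -
              φω' x * ∫ y in Set.Ico (-(3/2) : ℝ) (3/2),
                Complex.exp (-(2 * (π : ℂ) * Complex.I * (ξω' : ℂ) * (y : ℂ))) * f y) →
      (‖S.comp (ContinuousLinearMap.adjoint S')‖₊ : ℝ≥0∞)
        ≤ C * ((⨆ x : ℝ, (2:ℝ≥0∞) ^ k * (‖deriv (𝓕 ⇑φω) x‖₊ : ℝ≥0∞)) ⊔
              (⨆ x : ℝ, (2:ℝ≥0∞) ^ k * (‖deriv (𝓕 ⇑φω') x‖₊ : ℝ≥0∞))) ^ 2 *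
            (2:ℝ≥0∞) ^ (3 * k) / ENNReal.ofReal |ξω - ξω'| := by
  refine ⟨100, fun k n n' _ hnn ξω ξω' hξ hξ' φω φω' hs hs' S S' hS hS' => ?_⟩
  have hk : (0:ℝ) < 2 ^ k := by positivity
  have hne : ξω ≠ ξω' := by
    rintro rfl
    have h1 : (n:ℝ) < n' + 1 := lt_of_mul_lt_mul_left (hξ.1.trans_lt hξ'.2) hk.le
    have h2 : (n':ℝ) < n + 1 := lt_of_mul_lt_mul_left (hξ'.1.trans_lt hξ.2) hk.le
    norm_cast at h1 h2
    omega
  have hpos : 0 < |ξω - ξω'| := abs_pos.2 (sub_ne_zero.2 hne)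
  have h2k : ∀ j : ℤ, (2:ℝ≥0∞) ^ j = ENNReal.ofReal (2 ^ j) := fun j => by
    rw [show ((2:ℝ) ^ j) = (((2:ℝ≥0) ^ j : ℝ≥0) : ℝ) by push_cast; rfl,
      ENNReal.ofReal_coe_nnreal, ENNReal.coe_zpow (by norm_num)]
    rfl
  set 𝔇 : ℝ≥0∞ := (⨆ x : ℝ, (2:ℝ≥0∞) ^ k * (‖deriv (𝓕 ⇑φω) x‖₊ : ℝ≥0∞)) ⊔
              (⨆ x : ℝ, (2:ℝ≥0∞) ^ k * (‖deriv (𝓕 ⇑φω') x‖₊ : ℝ≥0∞)) with h𝔇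
  by_cases htop : 𝔇 = ⊤
  · -- An infinite supremum makes the right-hand side infinite.
    rw [htop]
    have h3 : (2:ℝ≥0∞) ^ (3 * k) ≠ 0 := by rw [h2k]; simp; positivity
    rw [ENNReal.top_pow (by norm_num), ENNReal.mul_top (by norm_num), ENNReal.top_mul h3,
      ENNReal.top_div_of_ne_top ENNReal.ofReal_ne_top]
    exact le_top
  have hbd : ∀ ψ : SchwartzMap ℝ ℂ,
      (⨆ x : ℝ, (2:ℝ≥0∞) ^ k * (‖deriv (𝓕 ⇑ψ) x‖₊ : ℝ≥0∞)) ≤ 𝔇 →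
      ∀ x, (2:ℝ) ^ k * ‖deriv (𝓕 ⇑ψ) x‖ ≤ 𝔇.toReal := fun ψ hψ x => by
    have h := (le_iSup (fun x : ℝ => (2:ℝ≥0∞) ^ k * (‖deriv (𝓕 ⇑ψ) x‖₊ : ℝ≥0∞)) x).trans hψ
    have h' := ENNReal.toReal_mono htop h
    rw [ENNReal.toReal_mul, h2k, ENNReal.toReal_ofReal hk.le] at h'
    simpa using h'
  have hmain := norm_comp_adjoint_le hne hξ hξ' φω φω' hs hs' (hbd φω le_sup_left)
    (hbd φω' le_sup_right) S S' hS hS'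
  have hR : ((100 : ℝ≥0) : ℝ≥0∞) * 𝔇 ^ 2 * (2:ℝ≥0∞) ^ (3 * k) / ENNReal.ofReal |ξω - ξω'| =
      ENNReal.ofReal (100 * 𝔇.toReal ^ 2 * 2 ^ (3 * k) / |ξω - ξω'|) := by
    rw [ENNReal.ofReal_div_of_pos hpos, ENNReal.ofReal_mul (by positivity),
      ENNReal.ofReal_mul (by positivity), ENNReal.ofReal_pow ENNReal.toReal_nonneg,
      ENNReal.ofReal_toReal htop, h2k]
    norm_num
  rw [hR]
  have := ENNReal.ofReal_le_ofReal hmain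
  rwa [ofReal_norm] at this
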